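/- Let k be a perfect field of characteristic p > 0, let R be a domain that is a strongly F-regular k-algebra of finite type, and let E be an F-finite field containing k. If R ⊗_k E is a domain, then R ⊗_k E is strongly F-regular. -/

import Mathlib

/-!
STATEMENT 11.  Let `k` be a perfect field of characteristic `p > 0`, let `R` be a domain that
is a strongly `F`-regular `k`-algebra of finite type, and let `E` be an `F`-finite field
containing `k`.  If `R ⊗_k E` is a domain, then `R ⊗_k E` is strongly `F`-regular.

Strong `F`-regularity is taken in the sense of Hochster–Huneke (see `StronglyFRegular`
below).  A field `E` of characteristic `p` is `F`-finite if `E^{1/p}` is a finite `E`-module;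
equivalently, `E` is a finite module over its subfield `E^p` of `p`-th powers, i.e. there is a
finite subset `s ⊆ E` such that every element of `E` is an `E^p`-linear combination of `s`
(predicate `FFinite` below).
-/

/-- A commutative ring `R` of characteristic `p` is strongly `F`-regular (Hochster–Huneke) if
for every `c` not in any minimal prime there are `e ∈ ℕ` and an additive map `φ : R → R` that
is `R`-linear for the `e`-th Frobenius twist (i.e. `φ(r^{p^e} x) = r φ(x)`, an `R`-linear map
`F^e_* R → R`) with `φ(c) = 1`. -/
def StronglyFRegular (p : ℕ) (R : Type*) [CommRing R] : Prop :=
  ∀ c : R, (∀ P ∈ minimalPrimes R, c ∉ P) →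
    ∃ (e : ℕ) (φ : R →+ R), (∀ r x : R, φ (r ^ p ^ e * x) = r * φ x) ∧ φ c = 1

/-- A commutative ring `R` of characteristic `p` is `F`-finite if `F_* R` is a finite
`R`-module: there is a finite subset `s ⊆ R` such that every element of `R` is a linear
combination of elements of `s` with coefficients that are `p`-th powers. -/
def FFinite (p : ℕ) (R : Type*) [CommRing R] : Prop :=
  ∃ s : Finset R, ∀ x : R, ∃ c : R → R, x = ∑ y ∈ s, (c y) ^ p * y

/-!
Call an additive map `φ` with `φ (r ^ p ^ e * x) = r * φ x` a Cartier map. Since `k` is perfect, the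
tensor product over `k` of two Cartier maps is well defined and again Cartier. Hence it suffices to
send a given nonzerodivisor `d` of `R ⊗ E` to some `c ⊗ 1` with `c ≠ 0` by a Cartier map: strong
`F`-regularity of `R` yields a Cartier map `u` with `u c = 1`, and composing with `u ⊗ η`, where
`η 1 = 1`, sends `d` to `1`.

Let `L = Frac R`, which is separable algebraic over some purely transcendental `k(x)`. As `L ⊗ E` is
algebraic over the polynomial ring `k[x] ⊗ E = E[x]`, the element `d` divides a nonzero polynomial
`∑ xᵐ ⊗ c_m`. For `e` large, separability makes the finitely many monomials `xᵐ` involved linearly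
independent over `L ^ p ^ e`, so some Cartier map `θ` of `L` sends one of them to `1` and the others
to `0`; tensoring with a Cartier map `η` of `E` that sends the matching coefficient to `1` sends the
polynomial to `1`. Since `R` is `F`-finite, clearing denominators turns `θ` into a Cartier map of
`R`, which replaces the value `1` by a nonzero element of `R`.
-/

open Module nonZeroDivisors
open scoped TensorProduct

/-- An additive endomorphism `φ` with `φ (r ^ q * x) = r * φ x`. For `q = p ^ e` in characteristic
`p` these are the Cartier (or `p⁻ᵉ`-linear) maps, i.e. the `S`-linear maps `Fᵉ_* S → S` occurring
in `StronglyFRegular`. -/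
def IsCartierLinear (q : ℕ) {S : Type*} [CommRing S] (φ : S →+ S) : Prop :=
  ∀ r x : S, φ (r ^ q * x) = r * φ x

namespace IsCartierLinear

variable {S : Type*} [CommRing S] {q q' : ℕ} {φ ψ : S →+ S}

theorem comp (hφ : IsCartierLinear q φ) (hψ : IsCartierLinear q' ψ) :
    IsCartierLinear (q * q') (φ.comp ψ) := fun r x ↦ by
  rw [AddMonoidHom.comp_apply, AddMonoidHom.comp_apply, pow_mul, hψ, hφ]

theorem comp_mulLeft (hφ : IsCartierLinear q φ) (a : S) :
    IsCartierLinear q (φ.comp (AddMonoidHom.mulLeft a)) := fun r x ↦ by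
  simp only [AddMonoidHom.comp_apply, AddMonoidHom.coe_mulLeft]
  rw [mul_left_comm, hφ]

theorem isReduced (hφ : IsCartierLinear q φ) (hq : 1 < q) (h1 : φ 1 = 1) : IsReduced S :=
  (isReduced_iff_pow_one_lt q hq).2 fun x hx ↦
    calc x = x * φ 1 := by rw [h1, mul_one]
      _ = φ (x ^ q * 1) := (hφ x 1).symm
      _ = 0 := by rw [hx, zero_mul, map_zero]

end IsCartierLinear

theorem exists_isCartierLinear_tensorProduct {p e : ℕ} {k : Type*} [Field k] [ExpChar k p]
    [PerfectRing k p] {A B : Type*} [CommRing A] [CommRing B] [Algebra k A] [Algebra k B]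
    {u : A →+ A} {v : B →+ B} (hu : IsCartierLinear (p ^ e) u) (hv : IsCartierLinear (p ^ e) v) :
    ∃ φ : A ⊗[k] B →+ A ⊗[k] B, IsCartierLinear (p ^ e) φ ∧ ∀ a b, φ (a ⊗ₜ b) = u a ⊗ₜ v b := by
  obtain _ | _ := subsingleton_or_nontrivial (A ⊗[k] B)
  · exact ⟨0, fun _ _ ↦ Subsingleton.elim _ _, fun _ _ ↦ Subsingleton.elim _ _⟩
  have : ExpChar (A ⊗[k] B) p := expChar_of_injective_algebraMap (algebraMap k _).injective p
  let f : A →+ B →+ A ⊗[k] B :=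
    AddMonoidHom.mk' (fun a ↦ (TensorProduct.mk k A B (u a)).toAddMonoidHom.comp v) fun a a' ↦ by
      ext b; simp only [AddMonoidHom.comp_apply, AddMonoidHom.add_apply, map_add]; rfl
  -- The map descends to the tensor product over `k` because every scalar is a `p ^ e`-th power.
  have hf (c : k) (a : A) (b : B) : f (c • a) b = f a (c • b) := by
    obtain ⟨d, rfl⟩ := (bijective_iterateFrobenius k p e).2 c
    change u _ ⊗ₜ v _ = u _ ⊗ₜ v _
    simp only [iterateFrobenius_def, Algebra.smul_def, map_pow]
    rw [hu, hv, ← Algebra.smul_def, ← Algebra.smul_def, TensorProduct.smul_tmul]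
  let φ := TensorProduct.liftAddHom f hf
  have hφ (a : A) (b : B) : φ (a ⊗ₜ b) = u a ⊗ₜ v b := rfl
  refine ⟨φ, fun s t ↦ ?_, hφ⟩
  induction s using TensorProduct.induction_on with
  | zero => rw [zero_pow (expChar_pow_pos k p e).ne', zero_mul, map_zero, zero_mul]
  | add s s' hs hs' => rw [add_pow_expChar_pow, add_mul, map_add, hs, hs', add_mul]
  | tmul a b =>
    induction t using TensorProduct.induction_on with
    | zero => simp only [mul_zero, map_zero]
    | add t t' ht ht' => rw [mul_add, map_add, ht, ht', map_add, mul_add]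
    | tmul a' b' =>
      simp only [Algebra.TensorProduct.tmul_pow, Algebra.TensorProduct.tmul_mul_tmul, hφ, hu a,
        hv b]

/-- Linear independence of the family `v` over the `q`-th powers of `S`, written without reference
to a subring because the `q`-th powers are closed under addition only when `q` is a power of the
exponential characteristic. -/
def PowIndependent (q : ℕ) {ι S : Type*} [CommRing S] (v : ι → S) : Prop :=
  ∀ (T : Finset ι) (f : ι → S), ∑ i ∈ T, f i ^ q * v i = 0 → ∀ i ∈ T, f i = 0

namespace PowIndependent

variable {ι S : Type*} [CommRing S] {q : ℕ} {v : ι → S}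

theorem of_unique [NoZeroDivisors S] [Unique ι] (hq : q ≠ 0) (hv : v default ≠ 0) :
    PowIndependent q v := by
  intro T f h i hi
  obtain rfl : T = {default} := Finset.eq_singleton_iff_unique_mem.2
    ⟨Unique.eq_default i ▸ hi, fun j _ ↦ Unique.eq_default j⟩
  rw [Finset.sum_singleton] at h
  rw [Unique.eq_default i]
  exact (pow_eq_zero_iff hq).1 ((mul_eq_zero.1 h).resolve_right hv)

theorem map_ringEquiv {S' : Type*} [CommRing S'] (hv : PowIndependent q v) (φ : S ≃+* S') :
    PowIndependent q (φ ∘ v) := by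
  intro T f h i hi
  refine (map_eq_zero_iff φ.symm φ.symm.injective).1 (hv T (φ.symm ∘ f) ?_ i hi)
  simpa using congrArg φ.symm h

theorem algebraMap_isFractionRing [IsDomain S] (hv : PowIndependent q v) (K : Type*) [Field K]
    [Algebra S K] [IsFractionRing S K] : PowIndependent q (algebraMap S K ∘ v) := by
  classical
  intro T f h i hi
  have hinj : Function.Injective (algebraMap S K) := IsFractionRing.injective S K
  obtain ⟨b, hb⟩ := IsLocalization.exist_integer_multiples S⁰ T f
  choose! g hg using hb
  have hrel : ∑ i ∈ T, g i ^ q * v i = 0 := hinj <|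
    calc algebraMap S K (∑ i ∈ T, g i ^ q * v i)
        = ∑ i ∈ T, algebraMap S K b ^ q * (f i ^ q * algebraMap S K (v i)) := by
          rw [map_sum]
          refine Finset.sum_congr rfl fun i hi ↦ ?_
          rw [map_mul, map_pow, hg i hi, Algebra.smul_def, mul_pow, mul_assoc]
      _ = algebraMap S K 0 := by
          rw [← Finset.mul_sum]
          exact (congrArg _ h).trans (by rw [mul_zero, map_zero])
  have hgi := hg i hi
  rw [hv T g hrel i hi, map_zero, Algebra.smul_def, eq_comm, mul_eq_zero] at hgi
  exact hgi.resolve_left (IsLocalization.to_map_ne_zero_of_mem_nonZeroDivisors K le_rfl b.2)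

end PowIndependent

theorem repr_mapPowExpCharPowOfIsSeparable_pow {ι K L : Type*} [Field K] [Field L] [Algebra K L]
    [Algebra.IsSeparable K L] (p e : ℕ) [ExpChar K p] (b : Basis ι K L) (x : L) (i : ι) :
    (b.mapPowExpCharPowOfIsSeparable p e).repr (x ^ p ^ e) i = b.repr x i ^ p ^ e := by
  have : ExpChar L p := expChar_of_injective_algebraMap (algebraMap K L).injective p
  have hx : x ^ p ^ e = (b.mapPowExpCharPowOfIsSeparable p e).repr.symm
      ((b.repr x).mapRange (iterateFrobenius K p e) (map_zero _)) := by
    rw [Basis.repr_symm_apply, Finsupp.linearCombination_apply,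
      Finsupp.sum_mapRange_index (by simp only [zero_smul, implies_true])]
    conv_lhs => rw [← b.linearCombination_repr x, ← iterateFrobenius_def,
      Finsupp.linearCombination_apply, map_finsuppSum]
    simp only [Basis.mapPowExpCharPowOfIsSeparable, Basis.mk_apply, iterateFrobenius_def,
      Algebra.smul_def, mul_pow, map_pow]
  rw [hx, LinearEquiv.apply_symm_apply, Finsupp.mapRange_apply, iterateFrobenius_def]

theorem PowIndependent.algebraMap_of_isSeparable {p e : ℕ} {ι K : Type*} [Field K] [ExpChar K p]
    {v : ι → K} (hv : PowIndependent (p ^ e) v) (L : Type*) [Field L] [Algebra K L]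
    [Algebra.IsSeparable K L] : PowIndependent (p ^ e) (algebraMap K L ∘ v) := by
  let b := Basis.ofVectorSpace K L
  -- By separability the `p ^ e`-th powers of the basis `b` form a basis again.
  let b' := b.mapPowExpCharPowOfIsSeparable p e
  intro T f h i hi
  refine b.repr.map_eq_zero_iff.1 (Finsupp.ext fun j ↦ ?_)
  refine hv T (fun i ↦ b.repr (f i) j) ?_ i hi
  calc ∑ i ∈ T, b.repr (f i) j ^ p ^ e * v i
      = b'.repr (∑ i ∈ T, f i ^ p ^ e * algebraMap K L (v i)) j := by
        rw [map_sum, Finsupp.finsetSum_apply]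
        refine Finset.sum_congr rfl fun i _ ↦ ?_
        rw [mul_comm (f i ^ _), ← Algebra.smul_def, map_smul, Finsupp.smul_apply,
          repr_mapPowExpCharPowOfIsSeparable_pow, smul_eq_mul, mul_comm]
    _ = 0 := by
        rw [show ∑ i ∈ T, f i ^ p ^ e * algebraMap K L (v i) = 0 from h, map_zero,
          Finsupp.zero_apply]

theorem coeff_pow_expChar_pow_mul_monomial {p e : ℕ} {k : Type*} [CommSemiring k] [ExpChar k p]
    {σ : Type*} {m m' : σ →₀ ℕ} (hm : ∀ i, m i < p ^ e) (hm' : ∀ i, m' i < p ^ e)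
    (f : MvPolynomial σ k) (b : σ →₀ ℕ) [Decidable (m' = m)] :
    MvPolynomial.coeff (p ^ e • b + m) (f ^ p ^ e * MvPolynomial.monomial m' 1) =
      if m' = m then MvPolynomial.coeff b f ^ p ^ e else 0 := by
  classical
  rw [MvPolynomial.coeff_mul_monomial', mul_one, ← MvPolynomial.map_iterateFrobenius_expand,
    MvPolynomial.coeff_map, iterateFrobenius_def]
  split_ifs with hle heq heq
  · rw [heq, add_tsub_cancel_right,
      MvPolynomial.coeff_expand_smul _ (expChar_pow_pos k p e).ne']
  · obtain ⟨i, hi⟩ := Finsupp.ne_iff.1 heq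
    rw [MvPolynomial.coeff_expand_of_not_dvd (i := i), zero_pow (expChar_pow_pos k p e).ne']
    intro hdvd
    have hmod : m' i ≡ p ^ e * b i + m i [MOD p ^ e] := (Nat.modEq_iff_dvd' (hle i)).2 hdvd
    exact hi <| Nat.ModEq.eq_of_lt_of_lt (by simpa [Nat.ModEq] using hmod) (hm' i) (hm i)
  · exact absurd (heq ▸ le_add_self) hle
  · rfl

theorem powIndependent_monomial {p e : ℕ} {k : Type*} [CommRing k] [IsReduced k] [ExpChar k p]
    {ι σ : Type*} {m : ι → σ →₀ ℕ} (hm : Function.Injective m) (hlt : ∀ j i, m j i < p ^ e) :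
    PowIndependent (p ^ e) fun j ↦ MvPolynomial.monomial (m j) (1 : k) := by
  classical
  intro T f h j hj
  ext b
  have hcoeff := congrArg (MvPolynomial.coeff (p ^ e • b + m j)) h
  simp only [MvPolynomial.coeff_sum, coeff_pow_expChar_pow_mul_monomial (hlt j) (hlt _), hm.eq_iff,
    Finset.sum_ite_eq', hj, if_true, MvPolynomial.coeff_zero] at hcoeff
  rw [MvPolynomial.coeff_zero]
  exact eq_zero_of_pow_eq_zero hcoeff

open scoped IntermediateField.algebraAdjoinAdjoin in
theorem powIndependent_aeval_monomial {p e : ℕ} {k L ι σ : Type*} [Field k] [ExpChar k p]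
    [Field L] [Algebra k L] {x : σ → L} (hx : AlgebraicIndependent k x)
    [Algebra.IsSeparable (IntermediateField.adjoin k (Set.range x)) L]
    {m : ι → σ →₀ ℕ} (hm : Function.Injective m) (hlt : ∀ j i, m j i < p ^ e) :
    PowIndependent (p ^ e) fun j ↦ MvPolynomial.aeval x (MvPolynomial.monomial (m j) (1 : k)) := by
  have : ExpChar (IntermediateField.adjoin k (Set.range x)) p :=
    expChar_of_injective_algebraMap (algebraMap k _).injective p
  have hind := (powIndependent_monomial (k := k) hm hlt).map_ringEquiv hx.aevalEquiv.toRingEquiv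
  exact (hind.algebraMap_isFractionRing
    (IntermediateField.adjoin k (Set.range x))).algebraMap_of_isSeparable L

theorem PowIndependent.linearIndependent {p e : ℕ} {F ι : Type*} [Field F] [ExpChar F p]
    {v : ι → F} (hv : PowIndependent (p ^ e) v) :
    LinearIndependent (iterateFrobenius F p e).fieldRange v := by
  rw [linearIndependent_iff']
  intro T g hg i hi
  choose f hf using fun j ↦ (g j).2
  refine Subtype.ext ?_
  rw [← hf i, hv T f ?_ i hi, map_zero]
  · rfl
  · simp only [← iterateFrobenius_def, hf]
    exact hg

theorem PowIndependent.exists_isCartierLinear {p e : ℕ} {F ι : Type*} [Field F] [ExpChar F p]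
    [DecidableEq ι] {v : ι → F} (hv : PowIndependent (p ^ e) v) (i₀ : ι) :
    ∃ θ : F →+ F, IsCartierLinear (p ^ e) θ ∧ ∀ i, θ (v i) = Pi.single (M := fun _ ↦ F) i₀ 1 i := by
  let frob := (iterateFrobenius F p e).rangeRestrictFieldEquiv
  let b := Basis.span hv.linearIndependent
  obtain ⟨g, hg⟩ := LinearMap.exists_extend (b.coord i₀)
  refine ⟨frob.symm.toAddMonoidHom.comp g.toAddMonoidHom, fun r x ↦ ?_, fun i ↦ ?_⟩
  · have hsmul : r ^ p ^ e * x = frob r • x := rfl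
    simp [hsmul]
  · have hgv : g (v i) = b.repr (b i) i₀ := by
      rw [← b.coord_apply, ← hg, LinearMap.comp_apply, Submodule.subtype_apply,
        Basis.span_apply]
    rw [b.repr_self, Finsupp.single_apply] at hgv
    simp [hgv, Pi.single_apply, apply_ite]

theorem exists_isCartierLinear_apply_eq_one {p : ℕ} (e : ℕ) {F : Type*} [Field F] [ExpChar F p]
    {a : F} (ha : a ≠ 0) : ∃ θ : F →+ F, IsCartierLinear (p ^ e) θ ∧ θ a = 1 := by
  have hind : PowIndependent (p ^ e) fun _ : Unit ↦ a :=
    .of_unique (expChar_pow_pos F p e).ne' ha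
  obtain ⟨θ, hθ, hθa⟩ := hind.exists_isCartierLinear ()
  exact ⟨θ, hθ, by simpa using hθa ()⟩

theorem IsCartierLinear.exists_restrict {q : ℕ} {R K : Type*} [CommRing R] [IsDomain R] [Field K]
    [Algebra R K] [IsFractionRing R K] (hR : FFinite q R) {θ : K →+ K} (hθ : IsCartierLinear q θ) :
    ∃ c : R, c ≠ 0 ∧ ∃ u : R →+ R, IsCartierLinear q u ∧
      ∀ r, algebraMap R K (u r) = algebraMap R K c * θ (algebraMap R K r) := by
  have hinj : Function.Injective (algebraMap R K) := IsFractionRing.injective R K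
  obtain ⟨s, hs⟩ := hR
  obtain ⟨b, hb⟩ := IsLocalization.exist_integer_multiples R⁰ s fun y ↦ θ (algebraMap R K y)
  choose! t ht using hb
  have hint (r : R) : ∃ a, algebraMap R K a = algebraMap R K b * θ (algebraMap R K r) := by
    obtain ⟨c, hc⟩ := hs r
    refine ⟨∑ y ∈ s, c y * t y, ?_⟩
    conv_rhs => rw [hc]
    simp only [map_sum, map_mul, map_pow, Finset.mul_sum]
    refine Finset.sum_congr rfl fun y hy ↦ ?_
    rw [hθ, ht y hy, Algebra.smul_def, mul_left_comm]
  choose u hu using hint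
  refine ⟨b, nonZeroDivisors.ne_zero b.2, AddMonoidHom.mk' u fun x y ↦ hinj ?_,
    fun r x ↦ hinj ?_, hu⟩
  · simp only [map_add, hu, mul_add]
  · simp only [AddMonoidHom.mk'_apply, map_mul, hu, map_pow]
    rw [hθ, mul_left_comm]

theorem fFinite_of_finite_iterateFrobenius {p e : ℕ} {R : Type*} [CommRing R] [ExpChar R p]
    (h : (iterateFrobenius R p e).Finite) : FFinite (p ^ e) R := by
  let := (iterateFrobenius R p e).toModule
  obtain ⟨s, hs⟩ : (⊤ : Submodule R R).FG := h.1
  refine ⟨s, fun x ↦ ?_⟩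
  obtain ⟨c, -, hc⟩ := Submodule.mem_span_finset.1 (hs ▸ Submodule.mem_top : x ∈ _)
  exact ⟨c, hc.symm⟩

theorem fFinite_of_finiteType {p : ℕ} (e : ℕ) (k : Type*) [CommRing k] [ExpChar k p]
    [PerfectRing k p] (A : Type*) [CommRing A] [ExpChar A p] [Algebra k A]
    [Algebra.FiniteType k A] : FFinite (p ^ e) A := by
  have hcomp : (iterateFrobenius A p e).comp (algebraMap k A) =
      (algebraMap k A).comp (iterateFrobenius k p e) :=
    RingHom.ext fun x ↦ by simp [iterateFrobenius_def]
  have hft : (iterateFrobenius A p e).FiniteType := by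
    refine .of_comp_finiteType (f := algebraMap k A) (hcomp ▸ .comp ?_ ?_)
    · exact RingHom.finiteType_algebraMap.2 inferInstance
    · exact .of_surjective _ (bijective_iterateFrobenius k p e).2
  have hint : (iterateFrobenius A p e).IsIntegral := fun x ↦
    ⟨Polynomial.X ^ p ^ e - Polynomial.C x,
      Polynomial.monic_X_pow_sub_C x (expChar_pow_pos A p e).ne',
      by simp [iterateFrobenius_def]⟩
  exact fFinite_of_finite_iterateFrobenius (hint.to_finite hft)

theorem FFinite.of_isLocalization {q : ℕ} (hq : q ≠ 0) {A : Type*} [CommRing A] (hA : FFinite q A)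
    {M : Submonoid A} (hM : M ≤ A⁰) (S : Type*) [CommRing S] [Algebra A S] [IsLocalization M S] :
    FFinite q S := by
  obtain ⟨s, hs⟩ := hA
  have hinj : Function.Injective (algebraMap A S) := IsLocalization.injective S hM
  refine ⟨s.map ⟨algebraMap A S, hinj⟩, fun x ↦ ?_⟩
  obtain ⟨⟨a, t⟩, rfl⟩ := IsLocalization.mk'_surjective M x
  -- `a / t = (a * t ^ (q - 1)) / t ^ q`, and the new denominator is a `q`-th power.
  obtain ⟨c, hc⟩ := hs (a * t ^ (q - 1))
  refine ⟨Function.extend (algebraMap A S) (fun y ↦ IsLocalization.mk' S (c y) t) 0, ?_⟩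
  refine ((IsLocalization.map_units S t).pow q).mul_right_cancel ?_
  calc IsLocalization.mk' S a t * algebraMap A S t ^ q
      = algebraMap A S (a * t ^ (q - 1)) := by
        rw [← mul_pow_sub_one hq (algebraMap A S t), ← mul_assoc, IsLocalization.mk'_spec,
          map_mul, map_pow]
    _ = ∑ y ∈ s, (IsLocalization.mk' S (c y) t * algebraMap A S t) ^ q * algebraMap A S y := by
        rw [hc]
        simp only [map_sum, map_mul, map_pow, IsLocalization.mk'_spec]
    _ = _ := by
        simp only [Finset.sum_map, Function.Embedding.coeFn_mk, hinj.extend_apply, Finset.sum_mul,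
          mul_pow, mul_right_comm]

theorem fFinite_of_essFiniteType {p : ℕ} (e : ℕ) (k : Type*) [CommRing k] [ExpChar k p]
    [PerfectRing k p] (R : Type*) [CommRing R] [ExpChar R p] [Algebra k R]
    [Algebra.EssFiniteType k R] : FFinite (p ^ e) R := by
  let R₀ := Algebra.EssFiniteType.subalgebra k R
  have : ExpChar R₀ p := RingHom.expChar R₀.val.toRingHom Subtype.val_injective p
  refine (fFinite_of_finiteType e k R₀).of_isLocalization (expChar_pow_pos R p e).ne'
    (M := Algebra.EssFiniteType.submonoid k R) (fun t ht ↦ ?_) R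
  exact mem_nonZeroDivisors_of_injective (f := R₀.val) Subtype.val_injective
    (IsUnit.mem_nonZeroDivisors ht)

theorem exists_ne_zero_dvd_map_tensorProduct {k A S E : Type*} [Field k] [CommRing A] [CommRing S]
    [CommRing E] [Algebra k A] [Algebra k S] [Algebra k E] [Algebra A S] [IsScalarTower k A S]
    [Algebra.IsAlgebraic A S] [IsDomain (A ⊗[k] E)] {d : S ⊗[k] E} (hd : d ∈ (S ⊗[k] E)⁰) :
    ∃ D : A ⊗[k] E, D ≠ 0 ∧
      d ∣ Algebra.TensorProduct.map (IsScalarTower.toAlgHom k A S) (AlgHom.id k E) D := by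
  let g := Algebra.TensorProduct.map (IsScalarTower.toAlgHom k A S) (AlgHom.id k E)
  let := g.toAlgebra
  have : IsScalarTower A (A ⊗[k] E) (S ⊗[k] E) :=
    .of_algebraMap_eq fun a ↦ by simp [RingHom.algebraMap_toAlgebra, g]
  have : Nontrivial E :=
    (Algebra.TensorProduct.includeRight : E →ₐ[k] A ⊗[k] E).toRingHom.domain_nontrivial
  have hinj : Function.Injective (algebraMap A (A ⊗[k] E)) :=
    Algebra.TensorProduct.includeLeft_injective (S := A) (algebraMap k E).injective
  have halg (s : S ⊗[k] E) : IsAlgebraic (A ⊗[k] E) s := by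
    induction s using TensorProduct.induction_on with
    | zero => exact isAlgebraic_zero
    | add s t hs ht => exact hs.add ht
    | tmul s x =>
      have hs : IsAlgebraic (A ⊗[k] E) (s ⊗ₜ[k] (1 : E)) :=
        ((Algebra.IsAlgebraic.isAlgebraic (R := A) s).algebraMap (A := S ⊗[k] E)).extendScalars hinj
      have hx : algebraMap (A ⊗[k] E) (S ⊗[k] E) (1 ⊗ₜ x) = 1 ⊗ₜ x := by
        simp [RingHom.algebraMap_toAlgebra, g]
      simpa [hx] using hs.mul (isAlgebraic_algebraMap (A := S ⊗[k] E) (1 ⊗ₜ[k] x : A ⊗[k] E))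
  exact (halg d).exists_nonzero_dvd hd

theorem PowIndependent.exists_isCartierLinear_sum_tmul_eq_one {p e : ℕ} {k L E ι : Type*} [Field k]
    [ExpChar k p] [Field L] [Algebra k L] [Field E] [Algebra k E] {v : ι → L}
    (hv : PowIndependent (p ^ e) v) {T : Finset ι} {ε : ι → E} {i₀ : ι} (hi₀ : i₀ ∈ T)
    (hε : ε i₀ ≠ 0) :
    ∃ (θ : L →+ L) (η : E →+ E), IsCartierLinear (p ^ e) θ ∧ IsCartierLinear (p ^ e) η ∧
      ∑ i ∈ T, θ (v i) ⊗ₜ[k] η (ε i) = 1 := by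
  classical
  have : ExpChar L p := expChar_of_injective_algebraMap (algebraMap k L).injective p
  have : ExpChar E p := expChar_of_injective_algebraMap (algebraMap k E).injective p
  obtain ⟨θ, hθ, hθv⟩ := hv.exists_isCartierLinear i₀
  obtain ⟨η, hη, hηε⟩ := exists_isCartierLinear_apply_eq_one (p := p) e hε
  refine ⟨θ, η, hθ, hη, ?_⟩
  rw [Finset.sum_eq_single_of_mem i₀ hi₀ fun i _ hi ↦ ?_]
  · rw [hθv, hηε, Pi.single_eq_same, Algebra.TensorProduct.one_def]
  · rw [hθv, Pi.single_eq_of_ne hi, TensorProduct.zero_tmul]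

theorem exists_forall_lt_pow {p : ℕ} (hp : 1 < p) {σ : Type*} (T : Finset (σ →₀ ℕ)) :
    ∃ e, ∀ m ∈ T, ∀ i, m i < p ^ e :=
  ⟨T.sup Finsupp.degree, fun m hm i ↦
    ((m.le_degree i).trans (Finset.le_sup hm)).trans_lt (Nat.lt_pow_self hp)⟩

section

variable {k L σ : Type*} [Field k] [CommRing L] [Algebra k L] {x : σ → L}

theorem isDomain_adjoin_range_tensorProduct (hx : AlgebraicIndependent k x)
    (E : Type*) [CommRing E] [IsDomain E] [Algebra k E] :
    IsDomain (Algebra.adjoin k (Set.range x) ⊗[k] E) :=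
  ((Algebra.TensorProduct.congr hx.aevalEquiv.symm AlgEquiv.refl).trans <|
    (Algebra.TensorProduct.comm k _ E).trans <|
    (MvPolynomial.algebraTensorAlgEquiv k E).restrictScalars k).toMulEquiv.isDomain

theorem exists_sum_aeval_monomial_tmul (hx : AlgebraicIndependent k x) {E : Type*} [CommRing E]
    [Algebra k E] {D : Algebra.adjoin k (Set.range x) ⊗[k] E} (hD : D ≠ 0) :
    ∃ c : (σ →₀ ℕ) →₀ E, c ≠ 0 ∧
      Algebra.TensorProduct.map (IsScalarTower.toAlgHom k _ L) (AlgHom.id k E) D =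
        ∑ m ∈ c.support, MvPolynomial.aeval x (MvPolynomial.monomial m (1 : k)) ⊗ₜ[k] c m := by
  obtain ⟨c, rfl⟩ := TensorProduct.eq_repr_basis_left
    ((MvPolynomial.basisMonomials σ k).map hx.aevalEquiv.toLinearEquiv) D
  refine ⟨c, fun hc ↦ hD (by rw [hc, Finsupp.sum_zero_index]), ?_⟩
  simp [Finsupp.sum]

end

theorem exists_isCartierLinear_apply_mul_eq_one {p : ℕ} [Fact p.Prime] {k L E : Type*}
    [Field k] [CharP k p] [PerfectRing k p] [Field L] [Algebra k L] [Algebra.EssFiniteType k L]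
    [Field E] [Algebra k E] {d : L ⊗[k] E} (hd : d ∈ (L ⊗[k] E)⁰) :
    ∃ (e : ℕ) (θ : L →+ L) (η : E →+ E) (φ : L ⊗[k] E →+ L ⊗[k] E) (a : L ⊗[k] E),
      IsCartierLinear (p ^ e) θ ∧ IsCartierLinear (p ^ e) η ∧ IsCartierLinear (p ^ e) φ ∧
      (∀ l x, φ (l ⊗ₜ x) = θ l ⊗ₜ η x) ∧ φ (a * d) = 1 := by
  have : PerfectField k := PerfectRing.toPerfectField k p
  obtain ⟨s, hs, hsep⟩ := exists_isTranscendenceBasis_and_isSeparable_of_perfectField k L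
  have : Algebra.IsSeparable (IntermediateField.adjoin k (Set.range ((↑) : s → L))) L := by
    convert hsep <;> exact Subtype.range_coe
  have := hs.isAlgebraic
  have := isDomain_adjoin_range_tensorProduct hs.1 E
  obtain ⟨D, hD, a, ha⟩ := exists_ne_zero_dvd_map_tensorProduct
    (A := Algebra.adjoin k (Set.range ((↑) : s → L))) hd
  obtain ⟨c, hc, hDc⟩ := exists_sum_aeval_monomial_tmul hs.1 hD
  obtain ⟨e, he⟩ := exists_forall_lt_pow (Fact.out : p.Prime).one_lt c.support
  obtain ⟨m₀, hm₀⟩ := Finsupp.support_nonempty_iff.2 hc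
  have hind : PowIndependent (p ^ e) fun m : c.support ↦
      MvPolynomial.aeval ((↑) : s → L) (MvPolynomial.monomial m.1 (1 : k)) :=
    powIndependent_aeval_monomial hs.1 Subtype.val_injective fun m i ↦ he m m.2 i
  obtain ⟨θ, η, hθ, hη, h1⟩ := hind.exists_isCartierLinear_sum_tmul_eq_one (k := k)
    (ε := fun m ↦ c m) (Finset.mem_univ ⟨m₀, hm₀⟩) (Finsupp.mem_support_iff.1 hm₀)
  obtain ⟨φ, hφ, hφ_tmul⟩ := exists_isCartierLinear_tensorProduct (k := k) hθ hη
  refine ⟨e, θ, η, φ, a, hθ, hη, hφ, hφ_tmul, ?_⟩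
  rw [mul_comm, ← ha, hDc, ← Finset.sum_coe_sort, map_sum, ← h1]
  simp only [hφ_tmul]

section

variable (k R L E : Type*) [Field k] [CommRing R] [CommRing L] [Algebra k R] [Algebra k L]
  [Algebra R L] [IsScalarTower k R L] [CommRing E] [Algebra k E]

theorem isLocalization_map_tensorProduct (M : Submonoid R) [IsLocalization M L] :
    letI := (Algebra.TensorProduct.map (IsScalarTower.toAlgHom k R L) (AlgHom.id k E)).toAlgebra
    IsLocalization (Algebra.algebraMapSubmonoid (R ⊗[k] E) M) (L ⊗[k] E) := by
  let := (Algebra.TensorProduct.map (IsScalarTower.toAlgHom k R L) (AlgHom.id k E)).toAlgebra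
  have : IsScalarTower R (R ⊗[k] E) (L ⊗[k] E) :=
    .of_algebraMap_eq fun r ↦ by simp [RingHom.algebraMap_toAlgebra]
  exact IsLocalization.tensorProduct_tensorProduct k E M L <|
    RingHom.ext fun x ↦ by simp [RingHom.algebraMap_toAlgebra]

variable {k R L E}

theorem map_tensorProduct_injective (h : Function.Injective (algebraMap R L)) :
    Function.Injective
      (Algebra.TensorProduct.map (IsScalarTower.toAlgHom k R L) (AlgHom.id k E)) :=
  Module.Flat.rTensor_preserves_injective_linearMap (M := E)
    (IsScalarTower.toAlgHom k R L).toLinearMap h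

theorem map_tensorProduct_mem_nonZeroDivisors [IsFractionRing R L] {d : R ⊗[k] E}
    (hd : d ∈ (R ⊗[k] E)⁰) :
    Algebra.TensorProduct.map (IsScalarTower.toAlgHom k R L) (AlgHom.id k E) d ∈ (L ⊗[k] E)⁰ := by
  let := (Algebra.TensorProduct.map (IsScalarTower.toAlgHom k R L) (AlgHom.id k E)).toAlgebra
  have := isLocalization_map_tensorProduct k R L E R⁰
  exact IsLocalization.map_nonZeroDivisors_le (Algebra.algebraMapSubmonoid (R ⊗[k] E) R⁰) _
    ⟨d, hd, rfl⟩

theorem exists_map_tensorProduct_eq_mul [IsFractionRing R L] (a : L ⊗[k] E) :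
    ∃ b ∈ R⁰, ∃ a' : R ⊗[k] E,
      Algebra.TensorProduct.map (IsScalarTower.toAlgHom k R L) (AlgHom.id k E) a' =
        algebraMap R L b ⊗ₜ 1 * a := by
  let := (Algebra.TensorProduct.map (IsScalarTower.toAlgHom k R L) (AlgHom.id k E)).toAlgebra
  have := isLocalization_map_tensorProduct k R L E R⁰
  obtain ⟨⟨_, b, hb, rfl⟩, a', ha'⟩ :=
    IsLocalization.exists_integer_multiple (Algebra.algebraMapSubmonoid (R ⊗[k] E) R⁰) a
  refine ⟨b, hb, a', ha'.trans ?_⟩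
  simp [Algebra.smul_def, RingHom.algebraMap_toAlgebra]

end

theorem isReduced_tensorProduct_of_field (p : ℕ) [Fact p.Prime] {k L E : Type*} [Field k]
    [CharP k p] [PerfectRing k p] [Field L] [Algebra k L] [Field E] [Algebra k E] :
    IsReduced (L ⊗[k] E) := by
  have : ExpChar L p := expChar_of_injective_algebraMap (algebraMap k L).injective p
  have : ExpChar E p := expChar_of_injective_algebraMap (algebraMap k E).injective p
  obtain ⟨θ, hθ, hθ1⟩ := exists_isCartierLinear_apply_eq_one (p := p) 1 (one_ne_zero (α := L))
  obtain ⟨η, hη, hη1⟩ := exists_isCartierLinear_apply_eq_one (p := p) 1 (one_ne_zero (α := E))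
  obtain ⟨φ, hφ, hφ_tmul⟩ := exists_isCartierLinear_tensorProduct (k := k) hθ hη
  refine hφ.isReduced (by simpa using (Fact.out : p.Prime).one_lt) ?_
  rw [Algebra.TensorProduct.one_def, hφ_tmul, hθ1, hη1]

theorem isReduced_tensorProduct_of_isDomain (p : ℕ) [Fact p.Prime] {k R E : Type*} [Field k]
    [CharP k p] [PerfectRing k p] [CommRing R] [IsDomain R] [Algebra k R] [Field E]
    [Algebra k E] : IsReduced (R ⊗[k] E) :=
  have : IsReduced (FractionRing R ⊗[k] E) := isReduced_tensorProduct_of_field p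
  isReduced_of_injective _ <|
    map_tensorProduct_injective (IsFractionRing.injective R (FractionRing R))

theorem mem_nonZeroDivisors_of_forall_notMem_minimalPrimes {S : Type*} [CommRing S] [IsReduced S]
    {d : S} (hd : ∀ P ∈ minimalPrimes S, d ∉ P) : d ∈ S⁰ := by
  rw [mem_nonZeroDivisors_iff_right]
  intro y hy
  have hmem : y ∈ sInf (minimalPrimes S) := Submodule.mem_sInf.2 fun P hP ↦
    (hP.1.1.mem_or_mem (hy ▸ P.zero_mem : y * d ∈ P)).resolve_right (hd P hP)
  rw [minimalPrimes, Ideal.sInf_minimalPrimes] at hmem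
  simpa [Ideal.radical_bot_of_isReduced] using hmem

theorem exists_isCartierLinear_apply_eq_tmul_one {p : ℕ} [Fact p.Prime] {k R E : Type*}
    [Field k] [CharP k p] [PerfectRing k p] [CommRing R] [IsDomain R] [Algebra k R]
    [Algebra.EssFiniteType k R] [Field E] [Algebra k E] {d : R ⊗[k] E} (hd : d ∈ (R ⊗[k] E)⁰) :
    ∃ (e : ℕ) (φ : R ⊗[k] E →+ R ⊗[k] E) (c : R),
      c ≠ 0 ∧ IsCartierLinear (p ^ e) φ ∧ φ d = c ⊗ₜ 1 := by
  let L := FractionRing R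
  let g := Algebra.TensorProduct.map (IsScalarTower.toAlgHom k R L) (AlgHom.id k E)
  have hg : Function.Injective g := map_tensorProduct_injective (IsFractionRing.injective R L)
  have : ExpChar R p := expChar_of_injective_algebraMap (algebraMap k R).injective p
  have : Algebra.EssFiniteType R L := .of_isLocalization L R⁰
  have : Algebra.EssFiniteType k L := .comp k R L
  obtain ⟨e, θ, η, φ, a, hθ, hη, hφ, hφ_tmul, h1⟩ :=
    exists_isCartierLinear_apply_mul_eq_one (p := p)
      (map_tensorProduct_mem_nonZeroDivisors (L := L) hd)
  obtain ⟨b, hb, a', ha'⟩ := exists_map_tensorProduct_eq_mul (R := R) a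
  obtain ⟨c, hc, u, hu, hcu⟩ := hθ.exists_restrict (fFinite_of_essFiniteType e k R)
  obtain ⟨ψ, hψ, hψ_tmul⟩ := exists_isCartierLinear_tensorProduct (k := k) hu hη
  have hψg (y : R ⊗[k] E) : g (ψ y) = algebraMap R L c ⊗ₜ 1 * φ (g y) := by
    induction y using TensorProduct.induction_on with
    | zero => simp only [map_zero, mul_zero]
    | add y z hy hz => rw [map_add, map_add, hy, hz, ← mul_add, ← map_add, ← map_add]
    | tmul r x => simp [g, hψ_tmul, hφ_tmul, hcu]
  let b' : R ⊗[k] E := b ⊗ₜ 1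
  -- `b' ^ (p ^ e - 1) * a'` represents `b' ^ p ^ e * a`, and `φ` turns `b' ^ p ^ e` into `b'`.
  have hga' : g (b' ^ (p ^ e - 1) * a' * d) = g b' ^ p ^ e * (a * g d) := by
    rw [← pow_sub_one_mul (expChar_pow_pos k p e).ne' (g b')]
    simp only [map_mul, map_pow, show g a' = g b' * a from ha']
    ring
  refine ⟨e, _, c * b, mul_ne_zero hc (nonZeroDivisors.ne_zero hb),
    hψ.comp_mulLeft (b' ^ (p ^ e - 1) * a'), hg ?_⟩
  rw [AddMonoidHom.comp_apply, AddMonoidHom.coe_mulLeft, hψg, hga', hφ, h1]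
  simp [g, b']

theorem base_change_to_F_finite_field_strongly_F_regular_general (p : ℕ) [Fact p.Prime]
    (k : Type*) [Field k] [CharP k p] [PerfectRing k p]
    (R : Type*) [CommRing R] [IsDomain R] [Algebra k R] [Algebra.EssFiniteType k R]
    (hR : StronglyFRegular p R) (E : Type*) [Field E] [Algebra k E] :
    StronglyFRegular p (TensorProduct k R E) := by
  intro d hd
  have : ExpChar E p := expChar_of_injective_algebraMap (algebraMap k E).injective p
  have : IsReduced (R ⊗[k] E) := isReduced_tensorProduct_of_isDomain p
  obtain ⟨e, φ, c, hc, hφ, hφd⟩ := exists_isCartierLinear_apply_eq_tmul_one (p := p)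
    (mem_nonZeroDivisors_of_forall_notMem_minimalPrimes hd)
  obtain ⟨e', u, hu, huc⟩ := hR c (by simpa [IsDomain.minimalPrimes_eq_singleton_bot])
  obtain ⟨η, hη, hη1⟩ := exists_isCartierLinear_apply_eq_one (p := p) e' (one_ne_zero (α := E))
  obtain ⟨ψ, hψ, hψ_tmul⟩ := exists_isCartierLinear_tensorProduct (k := k) hu hη
  refine ⟨e' + e, ψ.comp φ, pow_add p e' e ▸ hψ.comp hφ, ?_⟩
  rw [AddMonoidHom.comp_apply, hφd, hψ_tmul, huc, hη1, Algebra.TensorProduct.one_def]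

theorem base_change_to_F_finite_field_strongly_F_regular
    (p : ℕ) [Fact p.Prime]
    (k : Type*) [Field k] [CharP k p] [PerfectRing k p]
    (R : Type*) [CommRing R] [IsDomain R] [Algebra k R] [Algebra.FiniteType k R]
    (hR : StronglyFRegular p R)
    (E : Type*) [Field E] [CharP E p] [Algebra k E] (hE : FFinite p E)
    [IsDomain (TensorProduct k R E)] :
    StronglyFRegular p (TensorProduct k R E) :=
  base_change_to_F_finite_field_strongly_F_regular_general p k R hR E
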